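/- Let w(λ,x) be a nonnegative weight function that is totally positive of order 3, and let f : [0,∞) → [0,∞) be non-decreasing and Borel-measurable. Let X be a nonnegative random variable with probability density g such that, for each λ > 0, 0 < E[w(λ,X)] < ∞, E[w(λ,X)f(X)] < ∞ and E[w(λ,X)(f(X))²] < ∞. Then for all λ₁ > λ₂ > 0: H[λ₁,(f(X))²]·H[λ₂,f(X)] − H[λ₁,f(X)]·H[λ₂,(f(X))²] ≥ 0. -/

import Mathlib

open MeasureTheory

/-!
Symmetrising over two independent copies of `X` writes the `2 × 2` determinant
`E[u a] E[v b] - E[u b] E[v a]` as half the double integral of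
`(u x * v y - u y * v x) * (a x * b y - a y * b x)`. If `u / v` and `a / b` are both nondecreasing,
then the two factors always have the same sign. Total positivity of order two makes
`w l₁ / w l₂` nondecreasing for `l₂ < l₁`, and `f ^ m / f ^ n` is nondecreasing for `n ≤ m`.
-/

section TotallyPositive

variable {Λ α : Type*} [Preorder Λ] [Preorder α]

/-- A kernel is totally positive of order `n` if all its minors of size at most `n` are nonnegative.
Rows and columns are listed in decreasing order. -/
def TotallyPositive (n : ℕ) (w : Λ → α → ℝ) : Prop :=
  ∀ r : ℕ, 1 ≤ r → r ≤ n → ∀ (l : Fin r → Λ) (x : Fin r → α), StrictAnti l → StrictAnti x →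
    0 ≤ (Matrix.of fun i j => w (l i) (x j)).det

theorem TotallyPositive.mono {m n : ℕ} {w : Λ → α → ℝ} (hw : TotallyPositive n w) (hmn : m ≤ n) :
    TotallyPositive m w :=
  fun r hr hrm => hw r hr (hrm.trans hmn)

end TotallyPositive

section MonotoneRatioOn

variable {α : Type*}

/-- The ratio `u / v` is nondecreasing on `s`, for nonnegative `u` and `v`; it is
cross-multiplied so that `v` may vanish. -/
def MonotoneRatioOn [Preorder α] (u v : α → ℝ) (s : Set α) : Prop :=
  ∀ ⦃x⦄, x ∈ s → ∀ ⦃y⦄, y ∈ s → x ≤ y → u x * v y ≤ u y * v x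

theorem TotallyPositive.monotoneRatioOn {Λ : Type*} [Preorder Λ] [PartialOrder α]
    {w : Λ → α → ℝ} (hw : TotallyPositive 2 w) {l₁ l₂ : Λ} (hl : l₂ < l₁) (s : Set α) :
    MonotoneRatioOn (w l₁) (w l₂) s := by
  intro x _ y _ hxy
  rcases hxy.eq_or_lt with rfl | hxy
  · exact le_rfl
  · have hdet := hw 2 one_le_two le_rfl ![l₁, l₂] ![y, x] (by simpa using hl) (by simpa using hxy)
    simpa [Matrix.det_fin_two] using hdet

theorem MonotoneRatioOn.pow_of_monotoneOn [Preorder α] {f : α → ℝ} {s : Set α}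
    (hf : MonotoneOn f s) (hf_nonneg : ∀ x ∈ s, 0 ≤ f x) {m n : ℕ} (hnm : n ≤ m) :
    MonotoneRatioOn (f ^ m) (f ^ n) s := by
  intro x hx y hy hxy
  obtain ⟨k, rfl⟩ := Nat.exists_eq_add_of_le hnm
  have hfx := hf_nonneg x hx
  have hfy := hf_nonneg y hy
  calc f x ^ (n + k) * f y ^ n = (f x * f y) ^ n * f x ^ k := by ring
    _ ≤ (f x * f y) ^ n * f y ^ k := by gcongr; exact hf hx hy hxy
    _ = f y ^ (n + k) * f x ^ n := by ring

theorem MonotoneRatioOn.det_mul_det_nonneg [LinearOrder α] {u v a b : α → ℝ} {s : Set α}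
    (huv : MonotoneRatioOn u v s) (hab : MonotoneRatioOn a b s) {x y : α} (hx : x ∈ s)
    (hy : y ∈ s) : 0 ≤ (u x * v y - u y * v x) * (a x * b y - a y * b x) := by
  rcases le_total x y with hxy | hyx
  · exact mul_nonneg_of_nonpos_of_nonpos (sub_nonpos.2 (huv hx hy hxy))
      (sub_nonpos.2 (hab hx hy hxy))
  · exact mul_nonneg (sub_nonneg.2 (huv hy hx hyx)) (sub_nonneg.2 (hab hy hx hyx))

end MonotoneRatioOn

section Integral

variable {α : Type*} [MeasurableSpace α] {μ : Measure α}

/-- Andréief's identity for `2 × 2` determinants. -/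
theorem integral_prod_det_mul_det [SFinite μ] {u v a b : α → ℝ}
    (hua : Integrable (fun x => u x * a x) μ) (hub : Integrable (fun x => u x * b x) μ)
    (hva : Integrable (fun x => v x * a x) μ) (hvb : Integrable (fun x => v x * b x) μ) :
    ∫ p : α × α, (u p.1 * v p.2 - u p.2 * v p.1) * (a p.1 * b p.2 - a p.2 * b p.1) ∂(μ.prod μ) =
      2 * ((∫ x, u x * a x ∂μ) * (∫ x, v x * b x ∂μ) -
        (∫ x, u x * b x ∂μ) * (∫ x, v x * a x ∂μ)) := by
  have hdiag : Integrable (fun p : α × α =>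
      u p.1 * a p.1 * (v p.2 * b p.2) + v p.1 * b p.1 * (u p.2 * a p.2)) (μ.prod μ) :=
    (hua.mul_prod hvb).add (hvb.mul_prod hua)
  have hoff : Integrable (fun p : α × α =>
      u p.1 * b p.1 * (v p.2 * a p.2) + v p.1 * a p.1 * (u p.2 * b p.2)) (μ.prod μ) :=
    (hub.mul_prod hva).add (hva.mul_prod hub)
  calc
    _ = ∫ p : α × α, (u p.1 * a p.1 * (v p.2 * b p.2) + v p.1 * b p.1 * (u p.2 * a p.2)) -
          (u p.1 * b p.1 * (v p.2 * a p.2) + v p.1 * a p.1 * (u p.2 * b p.2)) ∂(μ.prod μ) := by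
      congr with p
      ring
    _ = ((∫ x, u x * a x ∂μ) * (∫ x, v x * b x ∂μ) +
            (∫ x, v x * b x ∂μ) * (∫ x, u x * a x ∂μ)) -
          ((∫ x, u x * b x ∂μ) * (∫ x, v x * a x ∂μ) +
            (∫ x, v x * a x ∂μ) * (∫ x, u x * b x ∂μ)) := by
      rw [integral_sub hdiag hoff, integral_add (hua.mul_prod hvb) (hvb.mul_prod hua),
        integral_add (hub.mul_prod hva) (hva.mul_prod hub)]
      simp only [← integral_prod_mul]
    _ = _ := by ring

theorem MonotoneRatioOn.integral_mul_integral_le [LinearOrder α] [SFinite μ] {u v a b : α → ℝ}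
    {s : Set α} (huv : MonotoneRatioOn u v s) (hab : MonotoneRatioOn a b s)
    (hs : ∀ᵐ x ∂μ, x ∈ s)
    (hua : Integrable (fun x => u x * a x) μ) (hub : Integrable (fun x => u x * b x) μ)
    (hva : Integrable (fun x => v x * a x) μ) (hvb : Integrable (fun x => v x * b x) μ) :
    (∫ x, u x * b x ∂μ) * (∫ x, v x * a x ∂μ) ≤ (∫ x, u x * a x ∂μ) * (∫ x, v x * b x ∂μ) := by
  have hnonneg : 0 ≤ ∫ p : α × α,
      (u p.1 * v p.2 - u p.2 * v p.1) * (a p.1 * b p.2 - a p.2 * b p.1) ∂(μ.prod μ) := by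
    apply integral_nonneg_of_ae
    filter_upwards [Measure.quasiMeasurePreserving_fst.ae hs,
      Measure.quasiMeasurePreserving_snd.ae hs] with p hp₁ hp₂
    exact huv.det_mul_det_nonneg hab hp₁ hp₂
  rw [integral_prod_det_mul_det hua hub hva hvb] at hnonneg
  linarith

theorem integral_withDensity_ofReal {g : α → ℝ} (hg : AEMeasurable g μ) (hg_nonneg : 0 ≤ᵐ[μ] g)
    (h : α → ℝ) :
    ∫ x, h x ∂(μ.withDensity fun x => ENNReal.ofReal (g x)) = ∫ x, h x * g x ∂μ := by
  rw [integral_withDensity_eq_integral_toReal_smul₀ hg.ennreal_ofReal (by simp)]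
  refine integral_congr_ae (hg_nonneg.mono fun x hx => ?_)
  simp only [ENNReal.toReal_ofReal hx, smul_eq_mul, mul_comm]

theorem integrable_withDensity_ofReal_iff {g : α → ℝ} (hg : AEMeasurable g μ)
    (hg_nonneg : 0 ≤ᵐ[μ] g) {h : α → ℝ} :
    Integrable h (μ.withDensity fun x => ENNReal.ofReal (g x)) ↔
      Integrable (fun x => h x * g x) μ := by
  rw [integrable_withDensity_iff_integrable_smul₀' hg.ennreal_ofReal (by simp)]
  refine integrable_congr (hg_nonneg.mono fun x hx => ?_)
  simp only [ENNReal.toReal_ofReal hx, smul_eq_mul, mul_comm]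

/-- The weighted premium `E[u(X) h(X)] / E[u(X)]` of `h(X)`, where `μ` is the law of `X`. -/
noncomputable def weightedPremium (μ : Measure α) (u h : α → ℝ) : ℝ :=
  (∫ x, u x * h x ∂μ) / ∫ x, u x ∂μ

theorem stmt_4_general {Λ : Type*} [Preorder Λ] [LinearOrder α] [SFinite μ]
    {w : Λ → α → ℝ} (hw : TotallyPositive 2 w) {f : α → ℝ} {s : Set α} (hs : ∀ᵐ x ∂μ, x ∈ s)
    (hf : MonotoneOn f s) (hf_nonneg : ∀ x ∈ s, 0 ≤ f x) {m n : ℕ} (hnm : n ≤ m) {L : Set Λ}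
    (hpos : ∀ l ∈ L, 0 < ∫ x, w l x ∂μ)
    (hm : ∀ l ∈ L, Integrable (fun x => w l x * f x ^ m) μ)
    (hn : ∀ l ∈ L, Integrable (fun x => w l x * f x ^ n) μ)
    {l₁ l₂ : Λ} (h₁ : l₁ ∈ L) (h₂ : l₂ ∈ L) (hl : l₂ < l₁) :
    0 ≤ weightedPremium μ (w l₁) (f ^ m) * weightedPremium μ (w l₂) (f ^ n) -
      weightedPremium μ (w l₁) (f ^ n) * weightedPremium μ (w l₂) (f ^ m) := by
  have hnum := (hw.monotoneRatioOn hl s).integral_mul_integral_le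
    (.pow_of_monotoneOn hf hf_nonneg hnm) hs (hm l₁ h₁) (hn l₁ h₁) (hm l₂ h₂) (hn l₂ h₂)
  simp only [weightedPremium, Pi.pow_apply, div_mul_div_comm, ← sub_div]
  exact div_nonneg (sub_nonneg.2 hnum) (mul_pos (hpos l₁ h₁) (hpos l₂ h₂)).le

end Integral

/-- If `w` is TP₃ and `f : [0,∞) → [0,∞)` is non-decreasing and Borel
measurable, with the relevant expectations finite and positive denominators for each `λ > 0`,
then for `λ₁ > λ₂ > 0`,
`H[λ₁,(f(X))²]·H[λ₂,f(X)] − H[λ₁,f(X)]·H[λ₂,(f(X))²] ≥ 0`. -/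
theorem stmt_4
    (w : ℝ → ℝ → ℝ) (hw_nonneg : ∀ l x : ℝ, 0 ≤ w l x)
    (hTP3 : ∀ r : ℕ, 1 ≤ r → r ≤ 3 → ∀ l x : Fin r → ℝ,
      (∀ i j : Fin r, i < j → l j < l i) →
      (∀ i j : Fin r, i < j → x j < x i) →
      0 ≤ Matrix.det (Matrix.of fun i j : Fin r => w (l i) (x j)))
    (f : ℝ → ℝ) (hf_nonneg : ∀ x : ℝ, 0 ≤ x → 0 ≤ f x)
    (hf_mono : ∀ x y : ℝ, 0 ≤ x → x ≤ y → f x ≤ f y)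
    (hf_meas : Measurable f)
    (g : ℝ → ℝ) (hg_nonneg : ∀ x : ℝ, 0 ≤ g x) (hg_meas : Measurable g)
    (hg_prob : ∫ x in Set.Ici (0:ℝ), g x = 1)
    (hInt : ∀ l : ℝ, 0 < l →
      IntegrableOn (fun x => w l x * g x) (Set.Ici 0) ∧
      IntegrableOn (fun x => w l x * f x * g x) (Set.Ici 0) ∧
      IntegrableOn (fun x => w l x * f x ^ 2 * g x) (Set.Ici 0) ∧
      0 < ∫ x in Set.Ici (0:ℝ), w l x * g x) :
    ∀ l1 l2 : ℝ, 0 < l2 → l2 < l1 →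
      0 ≤ ((∫ x in Set.Ici (0:ℝ), w l1 x * f x ^ 2 * g x) /
              (∫ x in Set.Ici (0:ℝ), w l1 x * g x)) *
            ((∫ x in Set.Ici (0:ℝ), w l2 x * f x * g x) /
              (∫ x in Set.Ici (0:ℝ), w l2 x * g x)) -
          ((∫ x in Set.Ici (0:ℝ), w l1 x * f x * g x) /
              (∫ x in Set.Ici (0:ℝ), w l1 x * g x)) *
            ((∫ x in Set.Ici (0:ℝ), w l2 x * f x ^ 2 * g x) /
              (∫ x in Set.Ici (0:ℝ), w l2 x * g x)) := by
  simp only [IntegrableOn,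
    ← integrable_withDensity_ofReal_iff hg_meas.aemeasurable (.of_forall hg_nonneg),
    ← integral_withDensity_ofReal hg_meas.aemeasurable (.of_forall hg_nonneg)] at hInt ⊢
  intro l1 l2 h2 h12
  simpa only [weightedPremium, Pi.pow_apply, pow_one] using
    stmt_4_general (TotallyPositive.mono hTP3 (Nat.le_succ 2))
      ((withDensity_absolutelyContinuous _ _).ae_le (ae_restrict_mem measurableSet_Ici))
      (fun x hx y _ => hf_mono x y hx) hf_nonneg one_le_two (L := Set.Ioi 0)
      (fun l hl => (hInt l hl).2.2.2) (fun l hl => (hInt l hl).2.2.1)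
      (fun l hl => by simpa only [pow_one] using (hInt l hl).2.1) (h2.trans h12) h2 h12
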